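/- Let {C₁,…,C₉} be a complete set of Pauli classes in dimension d = 8, and let S be the unique maximal commuting Pauli class, not equal up to phase to any of C₁,…,C₅, all of whose members are equal up to phase to members of C₁ ∪ ⋯ ∪ C₅. Then C₆, C₇, C₈, C₉, S are pairwise disjoint and the family {C₆, C₇, C₈, C₉, S} is unextendible: there is no maximal commuting Pauli class all of whose members are non-identity three-qubit Pauli operators not equal up to phase to any member of C₆ ∪ C₇ ∪ C₈ ∪ C₉ ∪ S. -/

import Mathlib

open Matrix

noncomputable section

/-- Matrices on the Hilbert space of `n` qubits, with rows and columns indexed by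
bit strings `Fin n → Fin 2`. -/
abbrev QMat (n : ℕ) := Matrix (Fin n → Fin 2) (Fin n → Fin 2) ℂ

/-- The single-qubit identity. -/
def pI : Matrix (Fin 2) (Fin 2) ℂ := 1

/-- The single-qubit Pauli X. -/
def pX : Matrix (Fin 2) (Fin 2) ℂ := !![0, 1; 1, 0]

/-- The single-qubit Pauli Y. -/
def pY : Matrix (Fin 2) (Fin 2) ℂ := !![0, -Complex.I; Complex.I, 0]

/-- The single-qubit Pauli Z. -/
def pZ : Matrix (Fin 2) (Fin 2) ℂ := !![1, 0; 0, -1]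

/-- The `n`-fold Kronecker product `W 0 ⊗ ⋯ ⊗ W (n-1)`, realized on indices
`Fin n → Fin 2`. -/
def kron (n : ℕ) (W : Fin n → Matrix (Fin 2) (Fin 2) ℂ) : QMat n :=
  fun v w => ∏ j, W j (v j) (w j)

/-- `M` is an `n`-qubit Pauli operator: an `n`-fold Kronecker product of matrices
from `{I₂, X, Y, Z}`. -/
def IsPauliOp (n : ℕ) (M : QMat n) : Prop :=
  ∃ W : Fin n → Matrix (Fin 2) (Fin 2) ℂ,
    (∀ j, W j = pI ∨ W j = pX ∨ W j = pY ∨ W j = pZ) ∧ M = kron n W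

/-- Two matrices are equal up to phase if one is a nonzero scalar multiple of the other. -/
def PhaseEq {m : Type*} (A B : Matrix m m ℂ) : Prop := ∃ c : ℂ, c ≠ 0 ∧ A = c • B

/-- A maximal commuting Pauli class in dimension `d = 2 ^ n`: a set of `d - 1`
pairwise commuting non-identity `n`-qubit Pauli operators, pairwise distinct up to phase. -/
def IsMaxClass (n : ℕ) (C : Set (QMat n)) : Prop :=
  C.Finite ∧ C.ncard = 2 ^ n - 1 ∧
  (∀ U ∈ C, IsPauliOp n U ∧ U ≠ 1) ∧
  (∀ U ∈ C, ∀ V ∈ C, U * V = V * U) ∧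
  (∀ U ∈ C, ∀ V ∈ C, U ≠ V → ¬ PhaseEq U V)

/-- Two classes are disjoint if no member of one is equal up to phase to a member of the other. -/
def ClassDisjoint {n : ℕ} (C D : Set (QMat n)) : Prop :=
  ∀ U ∈ C, ∀ V ∈ D, ¬ PhaseEq U V

/-- Two classes are equal up to phase (as sets of operators). -/
def ClassPhaseEq {n : ℕ} (C D : Set (QMat n)) : Prop :=
  (∀ U ∈ C, ∃ V ∈ D, PhaseEq U V) ∧ (∀ V ∈ D, ∃ U ∈ C, PhaseEq U V)

/-- The standard Hermitian inner product on `ι → ℂ` (conjugate-linear in the first slot). -/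
def cinner {ι : Type*} [Fintype ι] (x y : ι → ℂ) : ℂ :=
  ∑ k, (starRingEnd ℂ) (x k) * y k

/-!
Up to phase, the `n`-qubit Pauli operators form the space `𝔽₂²ⁿ`, and two of them commute exactly
when their labels are orthogonal for the standard symplectic form `ω`. Maximal commuting classes
thus become Lagrangian subspaces, and a complete set of classes in dimension `8` becomes a
partition of the nonzero vectors of `𝔽₂⁶` by nine Lagrangians `L i`.

Suppose a Lagrangian `R` were disjoint from `T` and from the four members outside a set `s` of five
members that cover `T`. Then `s` covers `R` as well. By counting, a Lagrangian that is covered by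
five members and equals none of them meets one of them in a plane and the other four in a single
nonzero vector each. Let `A` and `B` be the members that `T` and `R` meet in planes; they are
distinct, and there are nonzero `p ∈ T ⊓ B` and `q ∈ R ⊓ A`. For each of the four `b ∈ B`
orthogonal to `q`, the member `X b` containing `q + p + b` is disjoint from `R`, hence is one of the
four members outside `s`. Since `X b` is disjoint from `A`, `B` and `T`, it contains `u + b`
for every nonzero `u ∈ T ⊓ A` orthogonal to `b ≠ 0`.

Now write `X 0` as the graph of a map `e` from `A` to `B`. If `ω u (e u) = 0` for some nonzero
`u ∈ T ⊓ A`, then `u + e u` would lie in both `X 0` and `X (e u)`. So `ω u (e u) = 1` for each of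
the three nonzero vectors `u` of the plane `T ⊓ A`. This is absurd, because `u ↦ ω u (e u)` is
additive.
-/

section LinearAlgebra

variable {K V ι : Type*} [Field K] [AddCommGroup V] [Module K V]

lemma exists_add_mem_of_isCompl {X B : Submodule K V} (h : IsCompl X B) (a : V) :
    ∃ b ∈ B, a + b ∈ X := by
  obtain ⟨x, hx, b, hb, rfl⟩ := Submodule.mem_sup.mp (h.sup_eq_top ▸ Submodule.mem_top (x := a))
  exact ⟨-b, B.neg_mem hb, by simpa using hx⟩

variable [FiniteDimensional K V]

lemma sup_span_singleton_eq_of_finrank_le {W U : Submodule K V} (hWU : W ≤ U)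
    (hdim : Module.finrank K U ≤ Module.finrank K W + 1) {x : V} (hxU : x ∈ U) (hxW : x ∉ W) :
    W ⊔ Submodule.span K {x} = U := by
  have hlt : W < W ⊔ Submodule.span K {x} :=
    left_lt_sup.mpr fun h ↦ hxW (h (Submodule.mem_span_singleton_self x))
  have hle : W ⊔ Submodule.span K {x} ≤ U :=
    sup_le hWU ((Submodule.span_singleton_le_iff_mem x U).mpr hxU)
  exact Submodule.eq_of_le_of_finrank_le hle
    (hdim.trans (Submodule.finrank_lt_finrank_of_lt hlt))

lemma exists_mem_ne_zero_apply_eq_zero (f : V →ₗ[K] K) {W : Submodule K V}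
    (hW : 2 ≤ Module.finrank K W) : ∃ x ∈ W, x ≠ 0 ∧ f x = 0 := by
  have hker : LinearMap.ker (f.domRestrict W) ≠ ⊥ :=
    LinearMap.ker_ne_bot_of_finrank_lt (by rw [Module.finrank_self]; omega)
  obtain ⟨x, hx, hx0⟩ := Submodule.exists_mem_ne_zero_of_ne_bot hker
  exact ⟨x, x.2, fun h ↦ hx0 (Subtype.ext h), hx⟩

lemma ncard_coe_submodule [Finite K] (W : Submodule K V) :
    (W : Set V).ncard = Nat.card K ^ Module.finrank K W := by
  rw [← Nat.card_coe_set_eq, SetLike.coe_sort_coe, Module.natCard_eq_pow_finrank (K := K)]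

lemma ncard_submodule_sdiff_zero [Finite K] (W : Submodule K V) :
    ((W : Set V) \ {0}).ncard = Nat.card K ^ Module.finrank K W - 1 := by
  rw [Set.ncard_sdiff_singleton_of_mem W.zero_mem, ncard_coe_submodule]

lemma exists_mem_of_pairwise_disjoint [Finite K] [Fintype ι] {n : ℕ} {L : ι → Submodule K V}
    (hL : ∀ i, Module.finrank K (L i) = n) (hV : Module.finrank K V = 2 * n)
    (hι : Fintype.card ι = Nat.card K ^ n + 1)
    (hdisj : Pairwise fun i j ↦ Disjoint (L i) (L j)) (x : V) : ∃ i, x ∈ L i := by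
  have : Finite V := Module.finite_of_finite K
  have hdisj' : Pairwise (Function.onFun Disjoint fun i ↦ (L i : Set V) \ {0}) := fun i j hij ↦
    Set.disjoint_left.mpr fun v hvi hvj ↦
      hvi.2 (Submodule.disjoint_def.mp (hdisj hij) v hvi.1 hvj.1)
  have hcard : (⋃ i, (L i : Set V) \ {0}).ncard = (((⊤ : Submodule K V) : Set V) \ {0}).ncard := by
    rw [Set.ncard_iUnion_of_finite (fun i ↦ Set.toFinite _) hdisj', finsum_eq_sum_of_fintype]
    simp only [ncard_submodule_sdiff_zero, hL, finrank_top, hV, Finset.sum_const,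
      Finset.card_univ, hι, smul_eq_mul]
    rw [← Nat.sq_sub_sq, one_pow, ← pow_mul, mul_comm n 2]
  have hcover : (⋃ i, (L i : Set V) \ {0}) = ((⊤ : Submodule K V) : Set V) \ {0} :=
    Set.eq_of_subset_of_ncard_le (Set.iUnion_subset fun i ↦ Set.sdiff_subset_sdiff_left le_top)
      hcard.ge
  rcases eq_or_ne x 0 with rfl | hx
  · have : Nonempty ι := Fintype.card_pos_iff.mp (by omega)
    exact ⟨Classical.arbitrary ι, zero_mem _⟩
  · have hx' : x ∈ ⋃ i, (L i : Set V) \ {0} := hcover ▸ ⟨Submodule.mem_top, hx⟩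
    obtain ⟨i, hi⟩ := Set.mem_iUnion.mp hx'
    exact ⟨i, hi.1⟩

end LinearAlgebra

section Lagrangian

variable {K V : Type*} [Field K] [AddCommGroup V] [Module K V]

/-- A Lagrangian subspace for a bilinear form `ω`, encoded as a subspace that is its own
orthogonal complement. -/
def IsLagrangian (ω : LinearMap.BilinForm K V) (L : Submodule K V) : Prop :=
  ω.orthogonal L = L

variable {ω : LinearMap.BilinForm K V} {A B L : Submodule K V}

lemma IsLagrangian.apply_eq_zero (hL : IsLagrangian ω L) {x y : V} (hx : x ∈ L) (hy : y ∈ L) :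
    ω x y = 0 := by
  rw [← hL] at hy
  exact hy x hx

lemma IsLagrangian.mem_of_forall_apply_eq_zero (hL : IsLagrangian ω L) {y : V}
    (h : ∀ x ∈ L, ω x y = 0) : y ∈ L := by
  rw [← hL]
  exact h

variable [FiniteDimensional K V]

lemma two_mul_finrank_le_of_le_orthogonal (hω : ω.Nondegenerate) (hL : L ≤ ω.orthogonal L) :
    2 * Module.finrank K L ≤ Module.finrank K V := by
  have := LinearMap.BilinForm.finrank_orthogonal hω L
  have := Submodule.finrank_mono hL
  have := L.finrank_le
  omega

lemma isLagrangian_of_le_orthogonal (hω : ω.Nondegenerate) (hL : L ≤ ω.orthogonal L)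
    (hdim : Module.finrank K V ≤ 2 * Module.finrank K L) : IsLagrangian ω L := by
  have := LinearMap.BilinForm.finrank_orthogonal hω L
  exact (Submodule.eq_of_le_of_finrank_le hL (by omega)).symm

lemma IsLagrangian.two_mul_finrank (hL : IsLagrangian ω L) (hω : ω.Nondegenerate) :
    2 * Module.finrank K L = Module.finrank K V := by
  have h := LinearMap.BilinForm.finrank_orthogonal hω L
  have := L.finrank_le
  rw [hL] at h
  omega

lemma IsLagrangian.isCompl (hA : IsLagrangian ω A) (hB : IsLagrangian ω B)
    (hω : ω.Nondegenerate) (h : Disjoint A B) : IsCompl A B := by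
  refine (Submodule.isCompl_iff_disjoint A B ?_).mpr h
  have := hA.two_mul_finrank hω
  have := hB.two_mul_finrank hω
  omega

end Lagrangian

section CharTwo

variable {V ι : Type*} [AddCommGroup V] [Module (ZMod 2) V]

lemma zmod_two_eq_zero_or_one (a : ZMod 2) : a = 0 ∨ a = 1 := by
  decide +revert

lemma finrank_span_pair_eq_two {x y : V} (hx : x ≠ 0) (hy : y ≠ 0) (hxy : x ≠ y) :
    Module.finrank (ZMod 2) (Submodule.span (ZMod 2) {x, y}) = 2 := by
  have hli : LinearIndependent (ZMod 2) ![x, y] := by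
    refine LinearIndependent.pair_iff.mpr fun s t hst ↦ ?_
    rcases zmod_two_eq_zero_or_one s with rfl | rfl <;>
      rcases zmod_two_eq_zero_or_one t with rfl | rfl
    · exact ⟨rfl, rfl⟩
    · exact absurd hst (by simpa using hy)
    · exact absurd hst (by simpa using hx)
    · exact absurd hst (by simpa [← ZModModule.sub_eq_add, sub_eq_zero] using hxy)
  rw [← Matrix.range_cons_cons_empty x y ![], finrank_span_eq_card hli, Fintype.card_fin]

variable [FiniteDimensional (ZMod 2) V]

lemma add_mem_of_notMem_of_finrank_le {W U : Submodule (ZMod 2) V} (hWU : W ≤ U)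
    (hdim : Module.finrank (ZMod 2) U ≤ Module.finrank (ZMod 2) W + 1) {x y : V} (hx : x ∈ U)
    (hxW : x ∉ W) (hy : y ∈ U) (hyW : y ∉ W) : x + y ∈ W := by
  rw [← sup_span_singleton_eq_of_finrank_le hWU hdim hx hxW] at hy
  obtain ⟨w, hw, z, hz, rfl⟩ := Submodule.mem_sup.mp hy
  obtain ⟨c, rfl⟩ := Submodule.mem_span_singleton.mp hz
  rcases zmod_two_eq_zero_or_one c with rfl | rfl
  · simp [hw] at hyW
  · rwa [one_smul, add_left_comm, ZModModule.add_self, add_zero]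

end CharTwo

section Transversal

variable {V : Type*} [AddCommGroup V] [Module (ZMod 2) V] {ω : LinearMap.BilinForm (ZMod 2) V}
  {A B T X : Submodule (ZMod 2) V}

lemma IsLagrangian.apply_eq_apply_of_add_mem (hω : ω.IsSymm) (hA : IsLagrangian ω A)
    (hB : IsLagrangian ω B) (hX : IsLagrangian ω X) {a a' b b' : V} (ha : a ∈ A) (ha' : a' ∈ A)
    (hb : b ∈ B) (hb' : b' ∈ B) (h : a + b ∈ X) (h' : a' + b' ∈ X) : ω a b' = ω a' b := by
  have := hX.apply_eq_zero h h'
  rw [LinearMap.BilinForm.add_left, LinearMap.BilinForm.add_right,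
    LinearMap.BilinForm.add_right, hA.apply_eq_zero ha ha',
    hB.apply_eq_zero hb hb', zero_add, add_zero, hω.eq b a', CharTwo.add_eq_zero] at this
  exact this

/-- The position of a Lagrangian `T` relative to two disjoint Lagrangians `A` and `B` of dimension
three when `T` meets `A` in a plane: `p` is a point of `T` on `B`, and `q` is a point of `A`
off `T`. -/
structure IsPlanarFrame (ω : LinearMap.BilinForm (ZMod 2) V) (A B T : Submodule (ZMod 2) V)
    (p q : V) : Prop where
  left : IsLagrangian ω A
  right : IsLagrangian ω B
  transversal : IsLagrangian ω T
  disjoint : Disjoint A B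
  finrank_left : Module.finrank (ZMod 2) A = 3
  finrank_inf : Module.finrank (ZMod 2) ↥(T ⊓ A) = 2
  p_mem : p ∈ T ⊓ B
  p_ne_zero : p ≠ 0
  q_mem : q ∈ A
  q_notMem : q ∉ T

lemma IsPlanarFrame.apply_eq_apply (hsymm : ω.IsSymm) {p q : V}
    (h : IsPlanarFrame ω A B T p q) (hX : IsLagrangian ω X) {b c u : V} (hb : b ∈ B)
    (hqX : q + (p + b) ∈ X) (hu : u ∈ T ⊓ A) (hc : c ∈ B) (huX : u + c ∈ X) :
    ω q c = ω u b := by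
  rw [← h.left.apply_eq_apply_of_add_mem hsymm h.right hX hu.2 h.q_mem hc
    (add_mem h.p_mem.2 hb) huX hqX, map_add, h.transversal.apply_eq_zero hu.1 h.p_mem.1, zero_add]

variable [FiniteDimensional (ZMod 2) V]

lemma IsLagrangian.eq_zero_of_apply_eq_zero (hA : IsLagrangian ω A) (hAB : Disjoint A B)
    {W : Submodule (ZMod 2) V} (hWA : W ≤ A)
    (hdim : Module.finrank (ZMod 2) A ≤ Module.finrank (ZMod 2) W + 1) {w y : V} (hw : w ∈ A)
    (hwW : w ∉ W) (hy : y ∈ B) (hWy : ∀ x ∈ W, ω x y = 0) (hwy : ω w y = 0) : y = 0 := by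
  refine Submodule.disjoint_def.mp hAB y (hA.mem_of_forall_apply_eq_zero fun x hx ↦ ?_) hy
  rw [← sup_span_singleton_eq_of_finrank_le hWA hdim hw hwW] at hx
  obtain ⟨v, hv, z, hz, rfl⟩ := Submodule.mem_sup.mp hx
  obtain ⟨c, rfl⟩ := Submodule.mem_span_singleton.mp hz
  simp [hWy v hv, hwy]

lemma IsLagrangian.eq_zero_or_eq_of_apply_pair_eq_zero (hA : IsLagrangian ω A)
    (hAB : Disjoint A B) (hdim : Module.finrank (ZMod 2) A = 3) {x y b n : V} (hx : x ∈ A)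
    (hy : y ∈ A) (hx0 : x ≠ 0) (hy0 : y ≠ 0) (hxy : x ≠ y) (hb : b ∈ B) (hb0 : b ≠ 0)
    (hxb : ω x b = 0) (hyb : ω y b = 0) (hn : n ∈ B) (hxn : ω x n = 0) (hyn : ω y n = 0) :
    n = 0 ∨ n = b := by
  have hW : Submodule.span (ZMod 2) {x, y} ≤ A :=
    Submodule.span_le.mpr (Set.pair_subset hx hy)
  have hdimW := finrank_span_pair_eq_two hx0 hy0 hxy
  have hperp {m : V} (hxm : ω x m = 0) (hym : ω y m = 0) :
      ∀ w ∈ Submodule.span (ZMod 2) {x, y}, ω w m = 0 := by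
    intro w hw
    obtain ⟨s, t, rfl⟩ := Submodule.mem_span_pair.mp hw
    simp [hxm, hym]
  obtain ⟨w, hw, hwb⟩ : ∃ w ∈ A, ω w b ≠ 0 := by
    by_contra! h
    exact hb0 (Submodule.disjoint_def.mp hAB b (hA.mem_of_forall_apply_eq_zero h) hb)
  have hwW : w ∉ Submodule.span (ZMod 2) {x, y} := fun h ↦ hwb (hperp hxb hyb w h)
  have heq {m : V} (hm : m ∈ B) (hxm : ω x m = 0) (hym : ω y m = 0) (hwm : ω w m = 0) : m = 0 :=
    hA.eq_zero_of_apply_eq_zero hAB hW (by omega) hw hwW hm (hperp hxm hym) hwm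
  rcases zmod_two_eq_zero_or_one (ω w n) with hwn | hwn
  · exact .inl (heq hn hxn hyn hwn)
  · refine .inr (sub_eq_zero.mp (heq (sub_mem hn hb) (by simp [hxn, hxb]) (by simp [hyn, hyb]) ?_))
    simp [hwn, (zmod_two_eq_zero_or_one (ω w b)).resolve_left hwb]

namespace IsPlanarFrame

variable {p q : V}

lemma apply_eq_one (h : IsPlanarFrame ω A B T p q) : ω q p = 1 := by
  refine (zmod_two_eq_zero_or_one _).resolve_left fun hqp ↦ h.p_ne_zero ?_
  refine h.left.eq_zero_of_apply_eq_zero h.disjoint (inf_le_right : T ⊓ A ≤ A) ?_ h.q_mem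
    (fun hq ↦ h.q_notMem hq.1) h.p_mem.2
    (fun x hx ↦ h.transversal.apply_eq_zero hx.1 h.p_mem.1) hqp
  rw [h.finrank_left, h.finrank_inf]

lemma eq_zero_or_eq (h : IsPlanarFrame ω A B T p q) {u b n : V} (hu : u ∈ T ⊓ A) (hu0 : u ≠ 0)
    (hb : b ∈ B) (hb0 : b ≠ 0) (hqb : ω q b = 0) (hub : ω u b = 0) (hn : n ∈ B)
    (hqn : ω q n = 0) (hun : ω u n = 0) : n = 0 ∨ n = b := by
  refine h.left.eq_zero_or_eq_of_apply_pair_eq_zero h.disjoint h.finrank_left h.q_mem hu.2 ?_ hu0 ?_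
    hb hb0 hqb hub hn hqn hun
  · rintro rfl
    exact h.q_notMem (zero_mem T)
  · rintro rfl
    exact h.q_notMem hu.1

lemma apply_eq_one_of_ne (h : IsPlanarFrame ω A B T p q) {u u' b : V} (hu : u ∈ T ⊓ A)
    (hu0 : u ≠ 0) (hu' : u' ∈ T ⊓ A) (hu'0 : u' ≠ 0) (huu' : u ≠ u') (hb : b ∈ B)
    (hb0 : b ≠ 0) (hqb : ω q b = 0) (hub : ω u b = 0) : ω u' b = 1 := by
  refine (zmod_two_eq_zero_or_one _).resolve_left fun hu'b ↦ ?_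
  rcases h.left.eq_zero_or_eq_of_apply_pair_eq_zero h.disjoint h.finrank_left hu.2 hu'.2 hu0 hu'0
    huu' hb hb0 hub hu'b h.p_mem.2 (h.transversal.apply_eq_zero hu.1 h.p_mem.1)
    (h.transversal.apply_eq_zero hu'.1 h.p_mem.1) with hp | rfl
  · exact h.p_ne_zero hp
  · exact one_ne_zero (h.apply_eq_one.symm.trans hqb)

lemma apply_eq_zero_of_add_mem (hsymm : ω.IsSymm) (hω : ω.Nondegenerate)
    (h : IsPlanarFrame ω A B T p q) (hX : IsLagrangian ω X) (hXA : Disjoint X A)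
    (hXB : Disjoint X B) (hXT : Disjoint X T) {b c u : V} (hb : b ∈ B) (hb0 : b ≠ 0)
    (hqb : ω q b = 0) (hqX : q + (p + b) ∈ X) (hu : u ∈ T ⊓ A) (hu0 : u ≠ 0) (hub : ω u b = 0)
    (hc : c ∈ B) (huX : u + c ∈ X) : ω u c = 0 := by
  refine (zmod_two_eq_zero_or_one _).resolve_right fun huc ↦ ?_
  obtain ⟨u', hu', hu'0, hu'c⟩ := exists_mem_ne_zero_apply_eq_zero (ω.flip c) h.finrank_inf.ge
  rw [LinearMap.BilinForm.flip_apply] at hu'c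
  have huu' : u ≠ u' := by
    rintro rfl
    exact one_ne_zero (huc.symm.trans hu'c)
  obtain ⟨e, he, hu'X⟩ := exists_add_mem_of_isCompl (hX.isCompl h.right hω hXB) u'
  have hqe : ω q e = 1 := by
    rw [h.apply_eq_apply hsymm hX hb hqX hu' he hu'X,
      h.apply_eq_one_of_ne hu hu0 hu' hu'0 huu' hb hb0 hqb hub]
  have hue : ω u e = 0 := by
    rw [h.left.apply_eq_apply_of_add_mem hsymm h.right hX hu.2 hu'.2 hc he huX hu'X, hu'c]
  have hup : ω u p = 0 := h.transversal.apply_eq_zero hu.1 h.p_mem.1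
  rcases h.eq_zero_or_eq hu hu0 hb hb0 hqb hub (sub_mem he h.p_mem.2)
    (by rw [map_sub, hqe, h.apply_eq_one, sub_self]) (by rw [map_sub, hue, hup, sub_self])
    with hep | hep
  · obtain rfl := sub_eq_zero.mp hep
    have hu'p := Submodule.disjoint_def.mp hXT _ hu'X (add_mem hu'.1 h.p_mem.1)
    rw [← ZModModule.sub_eq_add, sub_eq_zero] at hu'p
    exact hu'0 (Submodule.disjoint_def.mp h.disjoint u' hu'.2 (hu'p ▸ he))
  · have hu'q : u' - q ∈ X := by
      convert sub_mem hu'X hqX using 1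
      rw [← hep]
      abel
    have := Submodule.disjoint_def.mp hXA _ hu'q (sub_mem hu'.2 h.q_mem)
    exact h.q_notMem (sub_eq_zero.mp this ▸ hu'.1)

lemma add_mem_of_apply_eq_zero (hsymm : ω.IsSymm) (hω : ω.Nondegenerate)
    (h : IsPlanarFrame ω A B T p q) (hX : IsLagrangian ω X) (hXA : Disjoint X A)
    (hXB : Disjoint X B) (hXT : Disjoint X T) {b u : V} (hb : b ∈ B) (hb0 : b ≠ 0)
    (hqb : ω q b = 0) (hqX : q + (p + b) ∈ X) (hu : u ∈ T ⊓ A) (hu0 : u ≠ 0)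
    (hub : ω u b = 0) : u + b ∈ X := by
  obtain ⟨c, hc, huX⟩ := exists_add_mem_of_isCompl (hX.isCompl h.right hω hXB) u
  have hqc : ω q c = 0 := (h.apply_eq_apply hsymm hX hb hqX hu hc huX).trans hub
  have huc : ω u c = 0 :=
    h.apply_eq_zero_of_add_mem hsymm hω hX hXA hXB hXT hb hb0 hqb hqX hu hu0 hub hc huX
  rcases h.eq_zero_or_eq hu hu0 hb hb0 hqb hub hc hqc huc with rfl | rfl
  · exact absurd (Submodule.disjoint_def.mp hXA u (add_zero u ▸ huX) hu.2) hu0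
  · exact huX

lemma apply_eq_one_of_add_mem (hsymm : ω.IsSymm) (hω : ω.Nondegenerate)
    (h : IsPlanarFrame ω A B T p q) {D : Submodule (ZMod 2) V} (hD : IsLagrangian ω D)
    (hDA : Disjoint D A) (hqD : q + (p + 0) ∈ D)
    (hX : ∀ b ∈ B, b ≠ 0 → ω q b = 0 → ∃ X, IsLagrangian ω X ∧ Disjoint X A ∧ Disjoint X B ∧
      Disjoint X T ∧ Disjoint X D ∧ q + (p + b) ∈ X)
    {u e : V} (hu : u ∈ T ⊓ A) (hu0 : u ≠ 0) (he : e ∈ B) (hueD : u + e ∈ D) : ω u e = 1 := by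
  refine (zmod_two_eq_zero_or_one _).resolve_left fun hue ↦ ?_
  have hqe : ω q e = 0 := by
    rw [h.apply_eq_apply hsymm hD (zero_mem B) hqD hu he hueD, map_zero]
  have he0 : e ≠ 0 := by
    rintro rfl
    exact hu0 (Submodule.disjoint_def.mp hDA u (add_zero u ▸ hueD) hu.2)
  obtain ⟨X, hXlag, hXA, hXB, hXT, hXD, hqX⟩ := hX e he he0 hqe
  have hueX := h.add_mem_of_apply_eq_zero hsymm hω hXlag hXA hXB hXT he he0 hqe hqX hu hu0 hue
  have hue0 := Submodule.disjoint_def.mp hXD _ hueX hueD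
  rw [← ZModModule.sub_eq_add, sub_eq_zero] at hue0
  exact hu0 (Submodule.disjoint_def.mp h.disjoint u hu.2 (hue0 ▸ he))

/-- `u ↦ ω u e`, with `u + e ∈ D` and `e ∈ B`, is additive, so it cannot be `1` on all three
nonzero vectors of the plane `T ⊓ A`. -/
lemma false_of_forall_exists (hsymm : ω.IsSymm) (hω : ω.Nondegenerate)
    (h : IsPlanarFrame ω A B T p q) {D : Submodule (ZMod 2) V} (hD : IsLagrangian ω D)
    (hDA : Disjoint D A) (hDB : Disjoint D B) (hqD : q + (p + 0) ∈ D)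
    (hX : ∀ b ∈ B, b ≠ 0 → ω q b = 0 → ∃ X, IsLagrangian ω X ∧ Disjoint X A ∧ Disjoint X B ∧
      Disjoint X T ∧ Disjoint X D ∧ q + (p + b) ∈ X) : False := by
  have hone {u e : V} := h.apply_eq_one_of_add_mem hsymm hω hD hDA hqD hX (u := u) (e := e)
  have hgraph := exists_add_mem_of_isCompl (hD.isCompl h.right hω hDB)
  obtain ⟨u, hu, hu0⟩ := Submodule.exists_mem_ne_zero_of_ne_bot
    (Submodule.one_le_finrank_iff.mp (h.finrank_inf ▸ one_le_two))
  obtain ⟨e, he, hueD⟩ := hgraph u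
  obtain ⟨u', hu', hu'0, huu'⟩ := exists_mem_ne_zero_apply_eq_zero (ω.flip e) h.finrank_inf.ge
  rw [LinearMap.BilinForm.flip_apply] at huu'
  obtain ⟨e', he', hu'eD⟩ := hgraph u'
  have hue : ω u e = 1 := hone hu hu0 he hueD
  have hu'e' : ω u' e' = 1 := hone hu' hu'0 he' hu'eD
  have hue' : ω u e' = 0 := by
    rw [h.left.apply_eq_apply_of_add_mem hsymm h.right hD hu.2 hu'.2 he he' hueD hu'eD, huu']
  have hsum0 : u + u' ≠ 0 := by
    rw [← ZModModule.sub_eq_add, sub_ne_zero]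
    rintro rfl
    exact one_ne_zero (hue.symm.trans huu')
  have hsum : ω (u + u') (e + e') = 1 :=
    hone (add_mem hu hu') hsum0 (add_mem he he') (add_add_add_comm u u' e e' ▸ add_mem hueD hu'eD)
  rw [LinearMap.BilinForm.add_left, map_add, map_add, hue, hue', huu', hu'e'] at hsum
  exact absurd hsum (by decide)

end IsPlanarFrame

end Transversal

section Cover

variable {V ι : Type*} [AddCommGroup V] [Module (ZMod 2) V] {T : Submodule (ZMod 2) V}
  {L : ι → Submodule (ZMod 2) V} {s : Finset ι}

lemma disjoint_of_forall_exists_mem (hL : Pairwise (Function.onFun Disjoint L))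
    (hT : ∀ x ∈ T, ∃ i ∈ s, x ∈ L i) {k : ι} (hk : k ∉ s) : Disjoint T (L k) := by
  refine Submodule.disjoint_def.mpr fun x hxT hxk ↦ ?_
  obtain ⟨i, hi, hxi⟩ := hT x hxT
  exact Submodule.disjoint_def.mp (hL (ne_of_mem_of_not_mem hi hk)) x hxi hxk

lemma exists_mem_of_forall_disjoint (hs : s.Nonempty) (hL : ∀ x, ∃ i, x ∈ L i)
    (hT : ∀ k ∉ s, Disjoint T (L k)) : ∀ x ∈ T, ∃ i ∈ s, x ∈ L i := by
  intro x hx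
  obtain ⟨k, hk⟩ := hL x
  by_cases hks : k ∈ s
  · exact ⟨k, hks, hk⟩
  · obtain ⟨i, hi⟩ := hs
    exact ⟨i, hi, Submodule.disjoint_def.mp (hT k hks) x hx hk ▸ zero_mem _⟩

variable [FiniteDimensional (ZMod 2) V]

lemma exists_two_le_finrank_inf (hT : ∀ x ∈ T, ∃ i ∈ s, x ∈ L i)
    (hs : s.card < 2 ^ Module.finrank (ZMod 2) T - 1) :
    ∃ i ∈ s, 2 ≤ Module.finrank (ZMod 2) ↥(T ⊓ L i) := by
  have : Finite V := Module.finite_of_finite (ZMod 2)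
  have : Nonempty ι := (hT 0 T.zero_mem).nonempty
  choose! f hfs hfL using hT
  have hcard : (s : Set ι).ncard < ((T : Set V) \ {0}).ncard := by
    rwa [ncard_submodule_sdiff_zero, Nat.card_zmod, Set.ncard_coe_finset]
  obtain ⟨x, ⟨hx, hx0⟩, y, ⟨hy, hy0⟩, hxy, hf⟩ :=
    Set.exists_ne_map_eq_of_ncard_lt_of_maps_to hcard fun x hx ↦ hfs x hx.1
  refine ⟨f x, hfs x hx, ?_⟩
  exact (finrank_span_pair_eq_two hx0 hy0 hxy).ge.trans (Submodule.finrank_mono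
    (Submodule.span_le.mpr (Set.pair_subset ⟨hx, hfL x hx⟩ ⟨hy, hf ▸ hfL y hy⟩)))

lemma inf_ne_bot_of_finrank_le (hL : Pairwise (Function.onFun Disjoint L))
    (hT : ∀ x ∈ T, ∃ i ∈ s, x ∈ L i) {i j : ι} (hi : i ∈ s) (hj : j ∈ s) (hji : j ≠ i)
    (hTi : ¬ T ≤ L i)
    (hdim : Module.finrank (ZMod 2) T ≤ Module.finrank (ZMod 2) ↥(T ⊓ L i) + 1)
    (hs : s.card ≤ 2 ^ Module.finrank (ZMod 2) ↥(T ⊓ L i) + 1) : T ⊓ L j ≠ ⊥ := by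
  have : Finite V := Module.finite_of_finite (ZMod 2)
  have : Nonempty ι := ⟨i⟩
  intro hTj
  choose! f hfs hfL using hT
  have hmaps : ∀ x ∈ (T : Set V) \ ↑(T ⊓ L i), f x ∈ (s : Set ι) \ {i, j} := by
    rintro x ⟨hx, hxi⟩
    refine ⟨hfs x hx, ?_⟩
    rintro (h | h)
    · exact hxi ⟨hx, h ▸ hfL x hx⟩
    · have hx0 : x ∈ T ⊓ L j := ⟨hx, h ▸ hfL x hx⟩
      rw [hTj, Submodule.mem_bot] at hx0
      exact hxi (hx0 ▸ zero_mem _)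
  have hcard : ((s : Set ι) \ {i, j}).ncard < ((T : Set V) \ ↑(T ⊓ L i)).ncard := by
    have hTi' := Submodule.finrank_lt_finrank_of_lt (inf_lt_left.mpr hTi)
    rw [Set.ncard_sdiff (Set.pair_subset hi hj), Set.ncard_pair hji.symm, Set.ncard_coe_finset,
      Set.ncard_sdiff (SetLike.coe_subset_coe.mpr inf_le_left), ncard_coe_submodule,
      ncard_coe_submodule, hdim.antisymm hTi', pow_succ, Nat.card_zmod]
    have := Nat.one_le_two_pow (n := Module.finrank (ZMod 2) ↥(T ⊓ L i))
    omega
  obtain ⟨x, ⟨hx, hxi⟩, y, ⟨hy, hyi⟩, hxy, hf⟩ :=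
    Set.exists_ne_map_eq_of_ncard_lt_of_maps_to hcard hmaps
  have hxyi := add_mem_of_notMem_of_finrank_le inf_le_left hdim hx hxi hy hyi
  have hxy0 := Submodule.disjoint_def.mp
    (hL fun h ↦ (hmaps x ⟨hx, hxi⟩).2 (.inl h)) _
    (add_mem (hfL x hx) (hf ▸ hfL y hy)) hxyi.2
  rw [← ZModModule.sub_eq_add, sub_eq_zero] at hxy0
  exact hxy hxy0

lemma exists_finrank_inf_eq_two (hL : Pairwise (Function.onFun Disjoint L))
    (hs : s.card = 5) (hTdim : Module.finrank (ZMod 2) T = 3) (hT : ∀ x ∈ T, ∃ i ∈ s, x ∈ L i)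
    (hTL : ∀ i ∈ s, ¬ T ≤ L i) :
    ∃ i ∈ s, Module.finrank (ZMod 2) ↥(T ⊓ L i) = 2 ∧ ∀ j ∈ s, T ⊓ L j ≠ ⊥ := by
  obtain ⟨i, hi, hle⟩ := exists_two_le_finrank_inf hT (by rw [hTdim, hs]; norm_num)
  have hlt := Submodule.finrank_lt_finrank_of_lt (inf_lt_left.mpr (hTL i hi))
  have htwo : Module.finrank (ZMod 2) ↥(T ⊓ L i) = 2 := by omega
  refine ⟨i, hi, htwo, fun j hj ↦ ?_⟩
  rcases eq_or_ne j i with rfl | hji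
  · intro h
    rw [h, finrank_bot] at htwo
    exact absurd htwo (by norm_num)
  · exact inf_ne_bot_of_finrank_le hL hT hi hj hji (hTL i hi) (by omega)
      (by rw [hs, htwo]; norm_num)

end Cover

section Spread

variable {V ι : Type*} [AddCommGroup V] [Module (ZMod 2) V] [FiniteDimensional (ZMod 2) V]
  {ω : LinearMap.BilinForm (ZMod 2) V}

lemma IsLagrangian.disjoint_of_add_mem {B R X : Submodule (ZMod 2) V} (hR : IsLagrangian ω R)
    (hdim : Module.finrank (ZMod 2) R ≤ Module.finrank (ZMod 2) ↥(R ⊓ B) + 1)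
    (hXB : Disjoint X B) {q c : V} (hq : q ∈ R) (hqB : q ∉ B) (hc : c ∈ B) (hqc : ω q c = 1)
    (hX : q + c ∈ X) : Disjoint R X := by
  refine Submodule.disjoint_def.mpr fun x hxR hxX ↦ by_contra fun hx0 ↦ ?_
  have hxB : x ∉ B := fun h ↦ hx0 (Submodule.disjoint_def.mp hXB x hxX h)
  have hqx : q + x ∈ R ⊓ B := add_mem_of_notMem_of_finrank_le inf_le_left hdim hq
    (fun h ↦ hqB h.2) hxR (fun h ↦ hxB h.2)
  have hqxc : q + x + c = 0 := Submodule.disjoint_def.mp hXB _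
    (add_right_comm q c x ▸ add_mem hX hxX) (add_mem hqx.2 hc)
  rw [← ZModModule.sub_eq_add, sub_eq_zero] at hqxc
  rw [← hqxc, hR.apply_eq_zero hq hqx.1] at hqc
  exact zero_ne_one hqc

variable [Fintype ι] {L : ι → Submodule (ZMod 2) V} {s : Finset ι} {T R : Submodule (ZMod 2) V}

lemma not_isPlanarFrame_of_forall_inf_ne_bot (hω : ω.Nondegenerate) (hsymm : ω.IsSymm)
    (hι : Fintype.card ι = 9) (hL : ∀ i, IsLagrangian ω (L i))
    (hdisj : Pairwise (Function.onFun Disjoint L)) (hV : Module.finrank (ZMod 2) V = 6)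
    (hR : IsLagrangian ω R)
    (hTs : ∀ x ∈ T, ∃ i ∈ s, x ∈ L i) (hRs : ∀ k ∈ s, R ⊓ L k ≠ ⊥) {i j : ι} (hi : i ∈ s)
    (hj : j ∈ s)
    (hRj : Module.finrank (ZMod 2) R ≤ Module.finrank (ZMod 2) ↥(R ⊓ L j) + 1) {p q : V}
    (hqR : q ∈ R) : ¬ IsPlanarFrame ω (L i) (L j) T p q := by
  intro h
  have hqj : q ∉ L j := fun hq ↦
    h.q_notMem (Submodule.disjoint_def.mp h.disjoint q h.q_mem hq ▸ zero_mem T)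
  have hLdim (k : ι) : Module.finrank (ZMod 2) (L k) = 3 := by
    have := (hL k).two_mul_finrank hω
    omega
  have hoff {k : ι} (hk : k ∉ s) :
      Disjoint (L k) (L i) ∧ Disjoint (L k) (L j) ∧ Disjoint (L k) T :=
    ⟨hdisj (ne_of_mem_of_not_mem hi hk).symm, hdisj (ne_of_mem_of_not_mem hj hk).symm,
      (disjoint_of_forall_exists_mem hdisj hTs hk).symm⟩
  have hmem {b : V} (hb : b ∈ L j) (hqb : ω q b = 0) : ∃ k ∉ s, q + (p + b) ∈ L k := by
    have hpb : p + b ∈ L j := add_mem h.p_mem.2 hb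
    obtain ⟨k, hk⟩ := exists_mem_of_pairwise_disjoint hLdim hV (by simpa using hι) hdisj
      (q + (p + b))
    have hkj : k ≠ j := by
      rintro rfl
      exact hqj ((add_mem_cancel_right hpb).mp hk)
    exact ⟨k, fun hks ↦ hRs k hks (hR.disjoint_of_add_mem hRj (hdisj hkj) hqR hqj hpb
      (by rw [map_add, h.apply_eq_one, hqb, add_zero]) hk).eq_bot, hk⟩
  obtain ⟨k, hks, hk⟩ := hmem (zero_mem _) (map_zero _)
  refine h.false_of_forall_exists hsymm hω (hL k) (hoff hks).1 (hoff hks).2.1 hk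
    fun b hb hb0 hqb ↦ ?_
  obtain ⟨l, hls, hl⟩ := hmem hb hqb
  have hlk : l ≠ k := by
    rintro rfl
    have hbl : b ∈ L l := by simpa using sub_mem hl hk
    exact hb0 (Submodule.disjoint_def.mp (hoff hls).2.1 b hbl hb)
  exact ⟨L l, hL l, (hoff hls).1, (hoff hls).2.1, (hoff hls).2.2, hdisj hlk, hl⟩

theorem not_disjoint_of_forall_exists_mem (hω : ω.Nondegenerate) (hsymm : ω.IsSymm)
    (hV : Module.finrank (ZMod 2) V = 6) (hι : Fintype.card ι = 9)
    (hL : ∀ i, IsLagrangian ω (L i)) (hdisj : Pairwise (Function.onFun Disjoint L))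
    (hs : s.card = 5) (hT : IsLagrangian ω T) (hR : IsLagrangian ω R)
    (hTs : ∀ x ∈ T, ∃ i ∈ s, x ∈ L i) (hRs : ∀ x ∈ R, ∃ i ∈ s, x ∈ L i)
    (hTL : ∀ i ∈ s, T ≠ L i) : ¬ Disjoint T R := by
  intro hTR
  have hdim {X : Submodule (ZMod 2) V} (hX : IsLagrangian ω X) :
      Module.finrank (ZMod 2) X = 3 := by
    have := hX.two_mul_finrank hω
    omega
  have hnle {X : Submodule (ZMod 2) V} (hX : IsLagrangian ω X) {i : ι} (hne : X ≠ L i) :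
      ¬ X ≤ L i := fun h ↦
    hne (Submodule.eq_of_le_of_finrank_eq h ((hdim hX).trans (hdim (hL i)).symm))
  obtain ⟨i, hi, hTi, hTmeets⟩ := exists_finrank_inf_eq_two hdisj hs (hdim hT) hTs
    fun i hi ↦ hnle hT (hTL i hi)
  obtain ⟨j, hj, hRj, hRmeets⟩ := exists_finrank_inf_eq_two hdisj hs (hdim hR) hRs
    fun k hk ↦ hnle hR fun h ↦ hTmeets k hk (h ▸ hTR.eq_bot)
  have hij : i ≠ j := by
    rintro rfl
    have hsum := Submodule.finrank_sup_add_finrank_inf_eq (T ⊓ L i) (R ⊓ L i)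
    have := Submodule.finrank_mono (sup_le inf_le_right inf_le_right : T ⊓ L i ⊔ R ⊓ L i ≤ L i)
    have hinf : (T ⊓ L i) ⊓ (R ⊓ L i) = ⊥ := (hTR.mono inf_le_left inf_le_left).eq_bot
    rw [hinf, finrank_bot, hTi, hRj] at hsum
    have := hdim (hL i)
    omega
  obtain ⟨p, hp, hp0⟩ := Submodule.exists_mem_ne_zero_of_ne_bot (hTmeets j hj)
  obtain ⟨q, hq, hq0⟩ := Submodule.exists_mem_ne_zero_of_ne_bot (hRmeets i hi)
  exact not_isPlanarFrame_of_forall_inf_ne_bot hω hsymm hι hL hdisj hV hR hTs hRmeets hi hj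
    (by rw [hdim hR, hRj]) hq.1
    { left := hL i
      right := hL j
      transversal := hT
      disjoint := hdisj hij
      finrank_left := hdim (hL i)
      finrank_inf := hTi
      p_mem := hp
      p_ne_zero := hp0
      q_mem := hq.2
      q_notMem := fun h ↦ hq0 (Submodule.disjoint_def.mp hTR q h hq.1) }

end Spread

section PauliLabels

variable {n : ℕ}

lemma PhaseEq.refl {m : Type*} (A : Matrix m m ℂ) : PhaseEq A A :=
  ⟨1, one_ne_zero, (one_smul ℂ A).symm⟩

lemma ClassPhaseEq.refl (C : Set (QMat n)) : ClassPhaseEq C C :=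
  ⟨fun U hU ↦ ⟨U, hU, PhaseEq.refl U⟩, fun U hU ↦ ⟨U, hU, PhaseEq.refl U⟩⟩

lemma kron_mul (W W' : Fin n → Matrix (Fin 2) (Fin 2) ℂ) :
    kron n W * kron n W' = kron n fun j ↦ W j * W' j := by
  ext v w
  simp only [kron, Matrix.mul_apply, ← Finset.prod_mul_distrib]
  rw [Finset.prod_univ_sum, Fintype.piFinset_univ]

lemma kron_one : kron n (fun _ ↦ 1) = 1 := by
  ext v w
  rcases eq_or_ne v w with rfl | h
  · simp [kron]
  · obtain ⟨j, hj⟩ := Function.ne_iff.mp h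
    rw [Matrix.one_apply_ne h]
    exact Finset.prod_eq_zero (Finset.mem_univ j) (Matrix.one_apply_ne hj)

lemma kron_smul (c : Fin n → ℂ) (W : Fin n → Matrix (Fin 2) (Fin 2) ℂ) :
    (kron n fun j ↦ c j • W j) = (∏ j, c j) • kron n W := by
  ext v w
  simp [kron, Finset.prod_mul_distrib]

/-- The symplectic form on Pauli labels, governing commutation of Pauli operators. Labels are
functions on `Fin n ⊕ Fin n`: the left coordinates are the exponents of `X`, the right ones
those of `Z`. -/
def pauliForm (n : ℕ) : LinearMap.BilinForm (ZMod 2) (Fin n ⊕ Fin n → ZMod 2) :=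
  Matrix.toBilin' (Matrix.J (Fin n) (ZMod 2))

lemma pauliForm_apply (u v : Fin n ⊕ Fin n → ZMod 2) :
    pauliForm n u v = ∑ j, (u (.inr j) * v (.inl j) - u (.inl j) * v (.inr j)) := by
  simp [pauliForm, Matrix.toBilin'_apply', Matrix.J, Matrix.fromBlocks_mulVec, dotProduct,
    Matrix.neg_mulVec, sub_eq_neg_add, Finset.sum_add_distrib]

lemma pauliForm_isSymm : (pauliForm n).IsSymm where
  eq u v := by
    simp only [pauliForm_apply, CharTwo.sub_eq_add]
    exact Finset.sum_congr rfl fun j _ ↦ by ring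

lemma pauliForm_nondegenerate : (pauliForm n).Nondegenerate :=
  LinearMap.BilinForm.nondegenerate_toBilin'_of_det_ne_zero' _
    (Matrix.isUnit_det_J (Fin n) (ZMod 2)).ne_zero

/-- The single-qubit Pauli matrix equal to `X ^ a * Z ^ b` up to phase. -/
def qubitPauli (a b : ZMod 2) : Matrix (Fin 2) (Fin 2) ℂ :=
  if a = 0 then (if b = 0 then pI else pZ) else (if b = 0 then pX else pY)

lemma stdAddChar_two_one : ZMod.stdAddChar (1 : ZMod 2) = -1 := by
  have := ZMod.stdAddChar_coe (N := 2) 1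
  rw [Int.cast_one, Int.cast_one] at this
  rw [this, ← Complex.exp_pi_mul_I]
  congr 1
  push_cast
  ring

lemma addChar_sum {A M α : Type*} [AddCommMonoid A] [CommMonoid M] (ψ : AddChar A M)
    (s : Finset α) (f : α → A) : ψ (∑ j ∈ s, f j) = ∏ j ∈ s, ψ (f j) :=
  map_prod ψ.toMonoidHom (fun j ↦ Multiplicative.ofAdd (f j)) s

lemma qubitPauli_mul (a b a' b' : ZMod 2) :
    qubitPauli a b * qubitPauli a' b' =
      ZMod.stdAddChar (b * a' - a * b') • (qubitPauli a' b' * qubitPauli a b) := by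
  rcases zmod_two_eq_zero_or_one a with rfl | rfl <;>
    rcases zmod_two_eq_zero_or_one b with rfl | rfl <;>
    rcases zmod_two_eq_zero_or_one a' with rfl | rfl <;>
    rcases zmod_two_eq_zero_or_one b' with rfl | rfl <;>
    simp [qubitPauli, pI, pX, pY, pZ, stdAddChar_two_one, CharTwo.neg_eq]

lemma qubitPauli_mul_self (a b : ZMod 2) : qubitPauli a b * qubitPauli a b = 1 := by
  unfold qubitPauli
  split_ifs <;> simp [pI, pX, pY, pZ, Matrix.one_fin_two]

/-- The `n`-qubit Pauli operator with a given label. -/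
def pauli (u : Fin n ⊕ Fin n → ZMod 2) : QMat n :=
  kron n fun j ↦ qubitPauli (u (.inl j)) (u (.inr j))

lemma pauli_mul (u v : Fin n ⊕ Fin n → ZMod 2) :
    pauli u * pauli v = ZMod.stdAddChar (pauliForm n u v) • (pauli v * pauli u) := by
  simp only [pauli, kron_mul, pauliForm_apply, addChar_sum, ← kron_smul, ← qubitPauli_mul]

lemma pauli_mul_self (u : Fin n ⊕ Fin n → ZMod 2) : pauli u * pauli u = 1 := by
  simp only [pauli, kron_mul, qubitPauli_mul_self, kron_one]

lemma pauli_zero : pauli (0 : Fin n ⊕ Fin n → ZMod 2) = 1 := by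
  simp only [pauli, qubitPauli, Pi.zero_apply, if_true, pI, kron_one]

lemma pauli_mul_ne_zero (u v : Fin n ⊕ Fin n → ZMod 2) : pauli u * pauli v ≠ 0 :=
  ((IsUnit.of_mul_eq_one _ (pauli_mul_self u)).mul
    (IsUnit.of_mul_eq_one _ (pauli_mul_self v))).ne_zero

lemma pauli_mul_comm_iff {u v : Fin n ⊕ Fin n → ZMod 2} :
    pauli u * pauli v = pauli v * pauli u ↔ pauliForm n u v = 0 := by
  rw [pauli_mul u v]
  rcases zmod_two_eq_zero_or_one (pauliForm n u v) with h | h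
  · simp [h]
  · simp [h, stdAddChar_two_one, neg_eq_iff_add_eq_zero, ← two_smul ℂ, pauli_mul_ne_zero]

lemma eq_of_phaseEq_pauli {u v : Fin n ⊕ Fin n → ZMod 2} (h : PhaseEq (pauli u) (pauli v)) :
    u = v := by
  obtain ⟨c, hc, hcuv⟩ := h
  have hcomm (w : Fin n ⊕ Fin n → ZMod 2) : pauliForm n u w = 0 ↔ pauliForm n v w = 0 := by
    rw [← pauli_mul_comm_iff, ← pauli_mul_comm_iff, hcuv, Matrix.smul_mul, Matrix.mul_smul]
    exact (smul_right_injective _ hc).eq_iff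
  rw [← sub_eq_zero]
  refine pauliForm_nondegenerate.1 _ fun w ↦ ?_
  rw [LinearMap.BilinForm.sub_left, sub_eq_zero]
  have := hcomm w
  rcases zmod_two_eq_zero_or_one (pauliForm n u w) with hu | hu <;>
    rcases zmod_two_eq_zero_or_one (pauliForm n v w) with hv | hv <;> simp_all

lemma pauli_injective : Function.Injective (pauli (n := n)) := fun u _ h ↦
  eq_of_phaseEq_pauli (h ▸ PhaseEq.refl (pauli u))

lemma IsPauliOp.exists_pauli_eq {M : QMat n} (h : IsPauliOp n M) : ∃ u, pauli u = M := by
  obtain ⟨W, hW, rfl⟩ := h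
  have hqubit (j : Fin n) : ∃ a b, qubitPauli a b = W j := by
    rcases hW j with h | h | h | h
    · exact ⟨0, 0, by simp [qubitPauli, h]⟩
    · exact ⟨1, 0, by simp [qubitPauli, h]⟩
    · exact ⟨1, 1, by simp [qubitPauli, h]⟩
    · exact ⟨0, 1, by simp [qubitPauli, h]⟩
  choose a b hab using hqubit
  exact ⟨Sum.elim a b, by simp only [pauli, Sum.elim_inl, Sum.elim_inr, hab]⟩

lemma phaseEq_pauli_iff {u v : Fin n ⊕ Fin n → ZMod 2} :
    PhaseEq (pauli u) (pauli v) ↔ u = v :=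
  ⟨eq_of_phaseEq_pauli, fun h ↦ h ▸ PhaseEq.refl _⟩

end PauliLabels

section LabelSpace

variable {n : ℕ} {C D : Set (QMat n)}

/-- The subspace spanned by the labels of the Pauli operators in a set. -/
def labelSpace (C : Set (QMat n)) : Submodule (ZMod 2) (Fin n ⊕ Fin n → ZMod 2) :=
  Submodule.span (ZMod 2) (pauli ⁻¹' C)

lemma insert_zero_preimage_pauli_subset_labelSpace :
    insert 0 (pauli ⁻¹' C) ⊆ (labelSpace C : Set (Fin n ⊕ Fin n → ZMod 2)) :=
  Set.insert_subset (zero_mem _) Submodule.subset_span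

lemma labelSpace_le_orthogonal (hC : ∀ U ∈ C, ∀ V ∈ C, U * V = V * U) :
    labelSpace C ≤ (pauliForm n).orthogonal (labelSpace C) := by
  refine Submodule.span_le.mpr fun v hv u hu ↦ ?_
  have hle : labelSpace C ≤ LinearMap.ker ((pauliForm n).flip v) :=
    Submodule.span_le.mpr fun u hu ↦ pauli_mul_comm_iff.mp (hC _ hu _ hv)
  exact hle hu

lemma finrank_label : Module.finrank (ZMod 2) (Fin n ⊕ Fin n → ZMod 2) = 2 * n := by
  simp [two_mul]

namespace IsMaxClass

lemma ncard_preimage_pauli (hC : IsMaxClass n C) : (pauli ⁻¹' C).ncard = 2 ^ n - 1 := by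
  rw [Set.ncard_preimage_of_injective_subset_range pauli_injective
    fun U hU ↦ (hC.2.2.1 U hU).1.exists_pauli_eq, hC.2.1]

lemma ncard_insert_zero_preimage_pauli (hC : IsMaxClass n C) :
    (insert 0 (pauli ⁻¹' C)).ncard = 2 ^ n := by
  have hzero : 0 ∉ pauli ⁻¹' C := fun h ↦ (hC.2.2.1 _ h).2 pauli_zero
  rw [Set.ncard_insert_of_notMem hzero, hC.ncard_preimage_pauli,
    Nat.sub_add_cancel Nat.one_le_two_pow]

lemma finrank_labelSpace (hC : IsMaxClass n C) :
    Module.finrank (ZMod 2) (labelSpace C) = n := by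
  have hle := two_mul_finrank_le_of_le_orthogonal pauliForm_nondegenerate
    (labelSpace_le_orthogonal hC.2.2.2.1)
  have hge := Set.ncard_le_ncard (insert_zero_preimage_pauli_subset_labelSpace (C := C))
  rw [hC.ncard_insert_zero_preimage_pauli, ncard_coe_submodule, Nat.card_zmod,
    Nat.pow_le_pow_iff_right one_lt_two] at hge
  rw [finrank_label] at hle
  omega

lemma coe_labelSpace (hC : IsMaxClass n C) :
    (labelSpace C : Set (Fin n ⊕ Fin n → ZMod 2)) = insert 0 (pauli ⁻¹' C) := by
  refine (Set.eq_of_subset_of_ncard_le insert_zero_preimage_pauli_subset_labelSpace ?_).symm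
  rw [hC.ncard_insert_zero_preimage_pauli, ncard_coe_submodule, Nat.card_zmod,
    hC.finrank_labelSpace]

lemma isLagrangian_labelSpace (hC : IsMaxClass n C) :
    IsLagrangian (pauliForm n) (labelSpace C) :=
  isLagrangian_of_le_orthogonal pauliForm_nondegenerate (labelSpace_le_orthogonal hC.2.2.2.1)
    (by rw [finrank_label, hC.finrank_labelSpace])

lemma pauli_mem_iff (hC : IsMaxClass n C) {u : Fin n ⊕ Fin n → ZMod 2} :
    pauli u ∈ C ↔ u ∈ labelSpace C ∧ u ≠ 0 := by
  rw [← SetLike.mem_coe, hC.coe_labelSpace, Set.mem_insert_iff, Set.mem_preimage]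
  refine ⟨fun h ↦ ⟨.inr h, ?_⟩, fun h ↦ h.1.resolve_left h.2⟩
  rintro rfl
  exact (hC.2.2.1 _ h).2 pauli_zero

lemma forall_iff (hC : IsMaxClass n C) {p : QMat n → Prop} :
    (∀ U ∈ C, p U) ↔ ∀ u ∈ labelSpace C, u ≠ 0 → p (pauli u) := by
  refine ⟨fun h u hu hu0 ↦ h _ (hC.pauli_mem_iff.mpr ⟨hu, hu0⟩), fun h U hU ↦ ?_⟩
  obtain ⟨u, rfl⟩ := (hC.2.2.1 U hU).1.exists_pauli_eq
  exact h u (hC.pauli_mem_iff.mp hU).1 (hC.pauli_mem_iff.mp hU).2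

lemma classDisjoint_iff (hC : IsMaxClass n C) (hD : IsMaxClass n D) :
    ClassDisjoint C D ↔ Disjoint (labelSpace C) (labelSpace D) := by
  simp only [ClassDisjoint, hC.forall_iff, hD.forall_iff, phaseEq_pauli_iff,
    Submodule.disjoint_def]
  refine ⟨fun h x hxC hxD ↦ by_contra fun hx ↦ h x hxC hx x hxD hx rfl, ?_⟩
  rintro h x hxC hx y hxD - rfl
  exact hx (h x hxC hxD)

lemma labelSpace_inj (hC : IsMaxClass n C) (hD : IsMaxClass n D) :
    labelSpace C = labelSpace D ↔ C = D := by
  refine ⟨fun h ↦ ?_, fun h ↦ h ▸ rfl⟩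
  refine Set.Subset.antisymm (hC.forall_iff.mpr fun u hu hu0 ↦ ?_)
    (hD.forall_iff.mpr fun u hu hu0 ↦ ?_)
  · exact hD.pauli_mem_iff.mpr ⟨h ▸ hu, hu0⟩
  · exact hC.pauli_mem_iff.mpr ⟨h ▸ hu, hu0⟩

lemma mem_labelSpace_of_phaseEq (hD : IsMaxClass n D) {u : Fin n ⊕ Fin n → ZMod 2} {V : QMat n}
    (hV : V ∈ D) (h : PhaseEq (pauli u) V) : u ∈ labelSpace D := by
  obtain ⟨v, rfl⟩ := (hD.2.2.1 V hV).1.exists_pauli_eq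
  exact eq_of_phaseEq_pauli h ▸ (hD.pauli_mem_iff.mp hV).1

lemma exists_mem_labelSpace {ι : Type*} {C : ι → Set (QMat n)} {s : Finset ι}
    (hC : ∀ i, IsMaxClass n (C i)) (hD : IsMaxClass n D) (hs : s.Nonempty)
    (h : ∀ U ∈ D, ∃ i ∈ s, ∃ V ∈ C i, PhaseEq U V) :
    ∀ x ∈ labelSpace D, ∃ i ∈ s, x ∈ labelSpace (C i) := by
  intro x hx
  rcases eq_or_ne x 0 with rfl | hx0
  · obtain ⟨i, hi⟩ := hs
    exact ⟨i, hi, zero_mem _⟩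
  · obtain ⟨i, hi, V, hV, hxV⟩ := hD.forall_iff.mp h x hx hx0
    exact ⟨i, hi, (hC i).mem_labelSpace_of_phaseEq hV hxV⟩

end IsMaxClass

end LabelSpace

/-- With `{C 0, …, C 8}` a complete set of Pauli classes in `d = 8` and `T`
the unique maximal commuting Pauli class (not equal up to phase to any of `C 0, …, C 4`)
whose members are, up to phase, members of `C 0 ∪ ⋯ ∪ C 4`, the classes
`C 5, C 6, C 7, C 8, T` are pairwise disjoint and form an unextendible family. -/
theorem unext_five_classes_d8 (C : Fin 9 → Set (QMat 3)) (T : Set (QMat 3))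
    (hmax : ∀ i, IsMaxClass 3 (C i))
    (hdisj : ∀ i j, i ≠ j → ClassDisjoint (C i) (C j))
    (hT : IsMaxClass 3 T)
    (hTsub : ∀ U ∈ T, ∃ V ∈ C 0 ∪ C 1 ∪ C 2 ∪ C 3 ∪ C 4, PhaseEq U V)
    (hTne : ∀ i : Fin 9, i.val < 5 → ¬ ClassPhaseEq T (C i)) :
    ((∀ i : Fin 9, 5 ≤ i.val → ClassDisjoint T (C i)) ∧
      (∀ i j : Fin 9, 5 ≤ i.val → 5 ≤ j.val → i ≠ j → ClassDisjoint (C i) (C j))) ∧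
    ¬ ∃ R : Set (QMat 3), IsMaxClass 3 R ∧
        ∀ U ∈ R, ∀ V ∈ C 5 ∪ C 6 ∪ C 7 ∪ C 8 ∪ T, ¬ PhaseEq U V := by
  let L (i : Fin 9) := labelSpace (C i)
  let s : Finset (Fin 9) := {0, 1, 2, 3, 4}
  have hs (i : Fin 9) : i ∈ s ↔ i.val < 5 := by decide +revert
  have hL : Pairwise (Function.onFun Disjoint L) := fun i j hij ↦
    ((hmax i).classDisjoint_iff (hmax j)).mp (hdisj i j hij)
  have hTs : ∀ x ∈ labelSpace T, ∃ i ∈ s, x ∈ L i :=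
    hT.exists_mem_labelSpace hmax ⟨0, by decide⟩
      (by simpa [s, or_assoc, or_and_right, exists_or] using hTsub)
  refine ⟨⟨fun i hi ↦ (hT.classDisjoint_iff (hmax i)).mpr
    (disjoint_of_forall_exists_mem hL hTs ((hs i).not.mpr hi.not_gt)),
    fun i j _ _ ↦ hdisj i j⟩, ?_⟩
  rintro ⟨R, hR, hRC⟩
  have hRL : ∀ k ∉ s, Disjoint (labelSpace R) (L k) := fun k hk ↦ by
    refine (hR.classDisjoint_iff (hmax k)).mp fun U hU V hV ↦ hRC U hU V ?_
    fin_cases k <;> simp_all [s]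
  have hTR : Disjoint (labelSpace T) (labelSpace R) :=
    ((hR.classDisjoint_iff hT).mp fun U hU V hV ↦ hRC U hU V (.inr hV)).symm
  have hcover := exists_mem_of_pairwise_disjoint (fun i ↦ (hmax i).finrank_labelSpace)
    finrank_label (by simp) hL
  exact not_disjoint_of_forall_exists_mem pauliForm_nondegenerate pauliForm_isSymm
    finrank_label (Fintype.card_fin 9) (fun i ↦ (hmax i).isLagrangian_labelSpace) hL rfl
    hT.isLagrangian_labelSpace hR.isLagrangian_labelSpace hTs
    (exists_mem_of_forall_disjoint ⟨0, by decide⟩ hcover hRL)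
    (fun i hi h ↦ hTne i ((hs i).mp hi)
      ((hT.labelSpace_inj (hmax i)).mp h ▸ ClassPhaseEq.refl T)) hTR
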